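/- Let n ≥ 3, let S and S̄ be disjoint sets with S ∪ S̄ = {2,…,n−1}, and let U := CZ⟨S̄⟩ · P_{S̄} · H_S · CZ⟨S⟩ · P_S · H_S · CX_{S̄→S} (matrix product, rightmost factor acting first). Then for every k ∈ S: U · (X_1 X_k) · U† = X_1 X_k. (This is the logical Pauli-constraint mapping X_1 X_k ↦ X_1 X_k realized by the compilation strategy C^H_mid for qubits carrying a Hadamard in the C-QSK.) -/

import Mathlib

open Complex Matrix Finset

/-- n-qubit operators: `2^n × 2^n` complex matrices indexed by bit strings
`x : Fin n → Bool` (qubit `i` of {1,…,n} corresponds to index `i-1 : Fin n`). -/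
abbrev NOp (n : ℕ) := Matrix (Fin n → Bool) (Fin n → Bool) ℂ

noncomputable section

/-- Pauli `X = [[0,1],[1,0]]`. -/
def Xg : Matrix Bool Bool ℂ := fun a b => if a = b then 0 else 1

/-- Pauli `Y = [[0,-i],[i,0]]` (indices `false, true` in this order). -/
def Yg : Matrix Bool Bool ℂ :=
  fun a b => if a = b then 0 else if a then Complex.I else -Complex.I

/-- Pauli `Z = diag(1,-1)`. -/
def Zg : Matrix Bool Bool ℂ := Matrix.diagonal (fun a => if a then -1 else 1)

/-- Hadamard `H = (1/√2)[[1,1],[1,-1]]`. -/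
def Hg : Matrix Bool Bool ℂ :=
  fun a b => ((Real.sqrt 2 : ℝ) : ℂ)⁻¹ * (if a && b then -1 else 1)

/-- Phase gate `P = diag(1, i)`. -/
def Pg : Matrix Bool Bool ℂ := Matrix.diagonal (fun a => if a then Complex.I else 1)

/-- `g_A = ∏_{i ∈ A} g_i`: the n-qubit operator acting as the single-qubit gate `g`
on every qubit of `A` and as the identity on all other qubits.  (Since the factors
`g_i` act on distinct tensor legs, the product is the entrywise formula below;
`layer g {k}` is the single-qubit operator `g_k`.) -/
def layer {n : ℕ} (g : Matrix Bool Bool ℂ) (A : Finset (Fin n)) : NOp n :=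
  fun x y => ∏ j, if j ∈ A then g (x j) (y j) else if x j = y j then 1 else 0

/-- `CZ_{i,j}`: diagonal entry `(-1)^{x_i x_j}` at bit string `x`. -/
def czPair {n : ℕ} (i j : Fin n) : NOp n :=
  Matrix.diagonal (fun x => if x i && x j then -1 else 1)

/-- The complete CZ-block `CZ⟨A⟩ = ∏_{{i,j} ⊆ A, i ≠ j} CZ_{i,j}`,
one factor per unordered pair (2-element subset) of `A`. -/
def czBlock {n : ℕ} (A : Finset (Fin n)) : NOp n :=
  Matrix.diagonal
    (fun x => ∏ p ∈ A.powersetCard 2, if ∀ i ∈ p, x i = true then (-1 : ℂ) else 1)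

/-- `CZ_M = ∏_{{i,j} ∈ M} CZ_{i,j}` for a set `M` of unordered pairs
(2-element Finsets), e.g. a perfect matching. -/
def czSet {n : ℕ} (M : Finset (Finset (Fin n))) : NOp n :=
  Matrix.diagonal
    (fun x => ∏ p ∈ M, if ∀ i ∈ p, x i = true then (-1 : ℂ) else 1)

/-- `M` is a perfect matching of the finite set `A`: a partition of `A`
into unordered pairs (2-element subsets). -/
def IsPerfectMatching {α : Type*} [DecidableEq α] (A : Finset α)
    (M : Finset (Finset α)) : Prop :=
  (∀ p ∈ M, p.card = 2) ∧ (∀ p ∈ M, ∀ q ∈ M, p ≠ q → Disjoint p q) ∧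
    M.biUnion id = A

/-- `CX_{A→B} = ∏_{i∈A, j∈B} CX_{i→j}` for disjoint `A`, `B`: the permutation
operator sending basis state `y` to the state whose bit at each `j ∈ B` is
`y_j ⊕ (⊕_{i∈A} y_i)`, all other bits unchanged (this is the product of the
individual commuting CNOTs `CX_{i→j}`, which replace `y_j` by `y_j ⊕ y_i`). -/
def cxBlock {n : ℕ} (A B : Finset (Fin n)) : NOp n :=
  fun x y =>
    if x = (fun j => if j ∈ B then
        xor (y j) (Nat.bodd (A.filter (fun i => y i = true)).card) else y j)
    then 1 else 0

end

noncomputable section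

/-- The middle qubits `{2, …, n-1}` (qubit `i ∈ {1,…,n}` is index `i-1 : Fin n`). -/
def midSet (n : ℕ) : Finset (Fin n) :=
  Finset.univ.filter (fun j : Fin n => j.val ≠ 0 ∧ j.val ≠ n - 1)

/-- The compiled circuit of the strategy `C^H_mid`:
`U = CZ⟨S̄⟩ · P_{S̄} · H_S · CZ⟨S⟩ · P_S · H_S · CX_{S̄→S}`
(matrix product, rightmost factor acting first), where `Sb` plays the role of `S̄`. -/
def Umid {n : ℕ} (S Sb : Finset (Fin n)) : NOp n :=
  czBlock Sb * layer Pg Sb * layer Hg S * czBlock S * layer Pg S * layer Hg S *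
    cxBlock Sb S

end

/-!
Conjugation is tracked tensor leg by tensor leg. The layer `H_S` turns `X_A` into the operator with
`Z` on `A ∩ S` and `X` on `A \ S`, which is diagonal on every leg in `S`; hence it commutes with the
diagonal gates `P_S` and `CZ⟨S⟩`, and the second `H_S` turns it back into `X_A`. When `A` avoids
`S̄`, the remaining gates commute with `X_A`: `P_{S̄}` and `CZ⟨S̄⟩` act on other legs, and flipping
target bits of `CX_{S̄→S}` commutes with adding the parity of the controls to them.
-/

section PiKronecker

variable {ι R : Type*} {κ : ι → Type*} [Fintype ι]

/-- The tensor product `⨂ᵢ f i` of square matrices, indexed by the product of their index types. -/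
def piKronecker [CommSemiring R] (f : ∀ i, Matrix (κ i) (κ i) R) :
    Matrix (∀ i, κ i) (∀ i, κ i) R :=
  fun x y => ∏ i, f i (x i) (y i)

theorem piKronecker_one [CommSemiring R] [∀ i, DecidableEq (κ i)] :
    piKronecker (fun i => (1 : Matrix (κ i) (κ i) R)) = 1 := by
  ext x y
  simp only [piKronecker, Matrix.one_apply, Fintype.prod_boole, funext_iff]

theorem piKronecker_mul [DecidableEq ι] [CommSemiring R] [∀ i, Fintype (κ i)]
    (f g : ∀ i, Matrix (κ i) (κ i) R) :
    piKronecker f * piKronecker g = piKronecker (fun i => f i * g i) := by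
  ext x y
  simp only [piKronecker, Matrix.mul_apply, Finset.prod_univ_sum, Fintype.piFinset_univ,
    Finset.prod_mul_distrib]

theorem piKronecker_conjTranspose [CommSemiring R] [StarRing R]
    (f : ∀ i, Matrix (κ i) (κ i) R) :
    (piKronecker f)ᴴ = piKronecker (fun i => (f i)ᴴ) := by
  ext x y
  simp only [piKronecker, Matrix.conjTranspose_apply, star_prod]

theorem piKronecker_mem_unitaryGroup [DecidableEq ι] [CommRing R] [StarRing R]
    [∀ i, Fintype (κ i)] [∀ i, DecidableEq (κ i)] {f : ∀ i, Matrix (κ i) (κ i) R}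
    (hf : ∀ i, f i ∈ Matrix.unitaryGroup (κ i) R) :
    piKronecker f ∈ Matrix.unitaryGroup (∀ i, κ i) R := by
  have hmul (i : ι) : f i * (f i)ᴴ = 1 := Matrix.mem_unitaryGroup_iff.mp (hf i)
  rw [Matrix.mem_unitaryGroup_iff, Matrix.star_eq_conjTranspose, piKronecker_conjTranspose,
    piKronecker_mul]
  simp only [hmul, piKronecker_one]

theorem semiconjBy_piKronecker [DecidableEq ι] [CommSemiring R] [∀ i, Fintype (κ i)]
    {f g h : ∀ i, Matrix (κ i) (κ i) R} (hfgh : ∀ i, SemiconjBy (f i) (g i) (h i)) :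
    SemiconjBy (piKronecker f) (piKronecker g) (piKronecker h) := by
  rw [SemiconjBy, piKronecker_mul, piKronecker_mul]
  exact congrArg piKronecker (funext fun i => (hfgh i).eq)

theorem piKronecker_permMatrix [CommSemiring R] [∀ i, DecidableEq (κ i)]
    (σ : ∀ i, Equiv.Perm (κ i)) :
    piKronecker (fun i => (σ i).permMatrix R) =
      Equiv.Perm.permMatrix R (Equiv.piCongrRight σ) := by
  ext x y
  simp only [piKronecker, PEquiv.toMatrix_apply, Equiv.toPEquiv_apply, Option.mem_some_iff,
    Fintype.prod_boole, funext_iff, Equiv.piCongrRight_apply, Pi.map_apply]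

theorem commute_diagonal_piKronecker [DecidableEq ι] [CommSemiring R] [∀ i, Fintype (κ i)]
    [∀ i, DecidableEq (κ i)] {T : Set ι} {d : (∀ i, κ i) → R} (hd : DependsOn d T)
    {f : ∀ i, Matrix (κ i) (κ i) R} (hf : ∀ i ∈ T, (f i).IsDiag) :
    Commute (Matrix.diagonal d) (piKronecker f) := by
  ext x y
  rw [Matrix.diagonal_mul, Matrix.mul_diagonal]
  by_cases hxy : ∀ i ∈ T, x i = y i
  · rw [hd hxy, mul_comm]
  · push Not at hxy
    obtain ⟨i, hi, hne⟩ := hxy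
    have hzero : piKronecker f x y = 0 :=
      Finset.prod_eq_zero (Finset.mem_univ i) (hf i hi hne)
    rw [hzero, mul_zero, zero_mul]

end PiKronecker

theorem diagonal_mem_unitaryGroup {m R : Type*} [Fintype m] [DecidableEq m] [CommRing R]
    [StarRing R] {d : m → R} (hd : ∀ i, d i ∈ unitary R) :
    Matrix.diagonal d ∈ Matrix.unitaryGroup m R := by
  rw [Matrix.mem_unitaryGroup_iff, Matrix.star_eq_conjTranspose, Matrix.diagonal_conjTranspose,
    Matrix.diagonal_mul_diagonal, ← Matrix.diagonal_one]
  exact congrArg Matrix.diagonal (funext fun i => Unitary.mul_star_self_of_mem (hd i))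

theorem permMatrix_mem_unitaryGroup {m R : Type*} [Fintype m] [DecidableEq m] [CommRing R]
    [StarRing R] (σ : Equiv.Perm m) : σ.permMatrix R ∈ Matrix.unitaryGroup m R := by
  rw [Matrix.mem_unitaryGroup_iff, Matrix.star_eq_conjTranspose, Matrix.conjTranspose_permMatrix,
    ← Matrix.permMatrix_mul, inv_mul_cancel, Matrix.permMatrix_one]

theorem Hg_mem_unitaryGroup : Hg ∈ Matrix.unitaryGroup Bool ℂ := by
  have hsq : ((Real.sqrt 2 : ℝ) : ℂ)⁻¹ * ((Real.sqrt 2 : ℝ) : ℂ)⁻¹ = 1 / 2 := by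
    rw [← mul_inv, ← Complex.ofReal_mul, Real.mul_self_sqrt (by norm_num)]
    norm_num
  rw [Matrix.mem_unitaryGroup_iff]
  ext a b
  cases a <;> cases b <;> simp [Matrix.mul_apply, Hg] <;> linear_combination 2 * hsq

theorem Pg_mem_unitaryGroup : Pg ∈ Matrix.unitaryGroup Bool ℂ :=
  diagonal_mem_unitaryGroup fun a => by cases a <;> simp [Unitary.mem_iff]

theorem semiconjBy_Hg_Xg_Zg : SemiconjBy Hg Xg Zg := by
  ext a b
  cases a <;> cases b <;> simp [Hg, Xg, Zg, Matrix.mul_apply]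

theorem semiconjBy_Hg_Zg_Xg : SemiconjBy Hg Zg Xg := by
  ext a b
  cases a <;> cases b <;> simp [Hg, Xg, Zg, Matrix.mul_apply]

theorem commute_Pg_Zg : Commute Pg Zg :=
  Matrix.commute_diagonal _ _

theorem Xg_eq_permMatrix : Xg = Equiv.Perm.permMatrix ℂ Equiv.boolNot := by
  ext a b
  cases a <;> cases b <;> simp [Xg, PEquiv.toMatrix_apply]

section Circuit

variable {n : ℕ}

theorem layer_eq_piKronecker (g : Matrix Bool Bool ℂ) (A : Finset (Fin n)) :
    layer g A = piKronecker (fun j => if j ∈ A then g else 1) := by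
  ext x y
  refine Finset.prod_congr rfl fun j _ => ?_
  by_cases hj : j ∈ A <;> simp [hj, Matrix.one_apply]

theorem layer_mul_layer_of_disjoint (g : Matrix Bool Bool ℂ) {A B : Finset (Fin n)}
    (hAB : Disjoint A B) : layer g A * layer g B = layer g (A ∪ B) := by
  simp only [layer_eq_piKronecker, piKronecker_mul]
  congr 1
  funext j
  by_cases hA : j ∈ A
  · simp [hA, Finset.disjoint_left.mp hAB hA]
  · simp [hA]

theorem commute_layer_of_disjoint (g h : Matrix Bool Bool ℂ) {A B : Finset (Fin n)}
    (hAB : Disjoint A B) : Commute (layer g A) (layer h B) := by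
  simp only [layer_eq_piKronecker]
  refine semiconjBy_piKronecker fun j => ?_
  by_cases hA : j ∈ A
  · simp [hA, Finset.disjoint_left.mp hAB hA]
  · simp [hA]

theorem layer_mem_unitaryGroup {g : Matrix Bool Bool ℂ} (hg : g ∈ Matrix.unitaryGroup Bool ℂ)
    (A : Finset (Fin n)) : layer g A ∈ Matrix.unitaryGroup (Fin n → Bool) ℂ := by
  rw [layer_eq_piKronecker]
  refine piKronecker_mem_unitaryGroup fun j => ?_
  split_ifs
  exacts [hg, one_mem _]

theorem commute_czBlock_piKronecker {A : Finset (Fin n)} {f : Fin n → Matrix Bool Bool ℂ}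
    (hf : ∀ j ∈ A, (f j).IsDiag) : Commute (czBlock A) (piKronecker f) := by
  refine commute_diagonal_piKronecker (T := A) (fun x y hxy => ?_) hf
  refine Finset.prod_congr rfl fun p hp => ?_
  have hpA : p ⊆ A := (Finset.mem_powersetCard.mp hp).1
  have hbits : (∀ i ∈ p, x i = true) ↔ ∀ i ∈ p, y i = true :=
    forall₂_congr fun i hi => by rw [hxy i (hpA hi)]
  simp only [hbits]

theorem commute_czBlock_layer_of_disjoint (g : Matrix Bool Bool ℂ) {A B : Finset (Fin n)}
    (hAB : Disjoint A B) : Commute (czBlock A) (layer g B) := by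
  rw [layer_eq_piKronecker]
  refine commute_czBlock_piKronecker fun j hj => ?_
  rw [if_neg (Finset.disjoint_left.mp hAB hj)]
  exact Matrix.isDiag_one

theorem czBlock_mem_unitaryGroup (A : Finset (Fin n)) :
    czBlock A ∈ Matrix.unitaryGroup (Fin n → Bool) ℂ := by
  refine diagonal_mem_unitaryGroup fun x => prod_mem fun p _ => ?_
  split_ifs <;> simp [Unitary.mem_iff]

/-- The permutation of bit strings that negates the bits in `A`; its matrix is `X_A`. -/
def flipBits (A : Finset (Fin n)) : Equiv.Perm (Fin n → Bool) :=
  Equiv.piCongrRight fun j => if j ∈ A then Equiv.boolNot else 1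

theorem layer_Xg_eq_permMatrix (A : Finset (Fin n)) :
    layer Xg A = (flipBits A).permMatrix ℂ := by
  rw [layer_eq_piKronecker, flipBits, ← piKronecker_permMatrix]
  congr 1
  funext j
  split_ifs
  exacts [Xg_eq_permMatrix, Matrix.permMatrix_one.symm]

/-- The sum mod 2 of the bits in `A`, which `CX_{A→B}` adds to every bit in `B`. -/
def bitParity (A : Finset (Fin n)) (y : Fin n → Bool) : Bool :=
  Nat.bodd (A.filter (fun i => y i = true)).card

theorem dependsOn_bitParity (A : Finset (Fin n)) : DependsOn (bitParity A) A := by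
  intro x y hxy
  rw [bitParity, bitParity, Finset.filter_congr fun i hi => by rw [hxy i hi]]

/-- The map on bit strings underlying `CX_{A→B}`: the parity of the bits in `A` is added to each
bit in `B`. -/
def cxMap (A B : Finset (Fin n)) (y : Fin n → Bool) : Fin n → Bool :=
  fun j => if j ∈ B then xor (y j) (bitParity A y) else y j

theorem cxBlock_apply (A B : Finset (Fin n)) (x y : Fin n → Bool) :
    cxBlock A B x y = if x = cxMap A B y then 1 else 0 :=
  rfl

theorem involutive_cxMap {A B : Finset (Fin n)} (hAB : Disjoint A B) :
    Function.Involutive (cxMap A B) := by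
  intro y
  have hcontrol (i : Fin n) (hi : i ∈ A) : cxMap A B y i = y i :=
    if_neg (Finset.disjoint_left.mp hAB hi)
  have hparity := dependsOn_bitParity A hcontrol
  funext j
  rw [cxMap, hparity]
  by_cases hj : j ∈ B <;> simp [cxMap, hj]

theorem commute_cxMap_flipBits {A B C : Finset (Fin n)} (hAC : Disjoint A C) :
    Function.Commute (cxMap A B) (flipBits C) := by
  intro y
  have hcontrol (i : Fin n) (hi : i ∈ A) : flipBits C y i = y i := by
    simp [flipBits, Finset.disjoint_left.mp hAC hi]
  have hparity := dependsOn_bitParity A hcontrol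
  funext j
  rw [cxMap, hparity]
  by_cases hB : j ∈ B <;> by_cases hC : j ∈ C <;> simp [cxMap, flipBits, hB, hC]

theorem cxBlock_mem_unitaryGroup {A B : Finset (Fin n)} (hAB : Disjoint A B) :
    cxBlock A B ∈ Matrix.unitaryGroup (Fin n → Bool) ℂ := by
  have hinv := involutive_cxMap hAB
  have hperm : cxBlock A B = (hinv.toPerm _).permMatrix ℂ := by
    ext x y
    simp only [cxBlock_apply, PEquiv.toMatrix_apply, Equiv.toPEquiv_apply, Option.mem_some_iff,
      Function.Involutive.coe_toPerm, hinv.eq_iff]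
  exact hperm ▸ permMatrix_mem_unitaryGroup _

theorem commute_cxBlock_layer_Xg {A C : Finset (Fin n)} (B : Finset (Fin n))
    (hAC : Disjoint A C) : Commute (cxBlock A B) (layer Xg C) := by
  rw [commute_iff_eq, layer_Xg_eq_permMatrix, PEquiv.mul_toMatrix_toPEquiv,
    PEquiv.toMatrix_toPEquiv_mul]
  ext x y
  have hcomm : flipBits C (cxMap A B ((flipBits C).symm y)) = cxMap A B y := by
    rw [← commute_cxMap_flipBits hAC, Equiv.apply_symm_apply]
  simp only [Matrix.submatrix_apply, id_eq, cxBlock_apply, ← hcomm,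
    EmbeddingLike.apply_eq_iff_eq]

/-- The operator `H_S X_A H_S`, given leg by leg: `Z` on the qubits in `A ∩ S` and `X` on those in
`A \ S`. -/
def hadamardConjX (S A : Finset (Fin n)) : NOp n :=
  piKronecker fun j => if j ∈ A then if j ∈ S then Zg else Xg else 1

theorem semiconjBy_layer_Hg_layer_Xg (S A : Finset (Fin n)) :
    SemiconjBy (layer Hg S) (layer Xg A) (hadamardConjX S A) := by
  simp only [layer_eq_piKronecker, hadamardConjX]
  refine semiconjBy_piKronecker fun j => ?_
  split_ifs <;> simp [semiconjBy_Hg_Xg_Zg]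

theorem semiconjBy_layer_Hg_hadamardConjX (S A : Finset (Fin n)) :
    SemiconjBy (layer Hg S) (hadamardConjX S A) (layer Xg A) := by
  simp only [layer_eq_piKronecker, hadamardConjX]
  refine semiconjBy_piKronecker fun j => ?_
  split_ifs <;> simp [semiconjBy_Hg_Zg_Xg]

theorem commute_layer_Pg_hadamardConjX (S A : Finset (Fin n)) :
    Commute (layer Pg S) (hadamardConjX S A) := by
  simp only [layer_eq_piKronecker, hadamardConjX]
  refine semiconjBy_piKronecker fun j => ?_
  split_ifs <;> simp [commute_Pg_Zg.semiconjBy]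

theorem commute_czBlock_hadamardConjX (S A : Finset (Fin n)) :
    Commute (czBlock S) (hadamardConjX S A) := by
  refine commute_czBlock_piKronecker fun j hj => ?_
  rw [if_pos hj]
  split_ifs
  exacts [Matrix.isDiag_diagonal _, Matrix.isDiag_one]

theorem Umid_mem_unitaryGroup {S Sb : Finset (Fin n)} (hdisj : Disjoint S Sb) :
    Umid S Sb ∈ Matrix.unitaryGroup (Fin n → Bool) ℂ := by
  have hH := layer_mem_unitaryGroup Hg_mem_unitaryGroup S
  have hP := layer_mem_unitaryGroup (n := n) Pg_mem_unitaryGroup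
  have hCX := cxBlock_mem_unitaryGroup hdisj.symm
  have hCZ := czBlock_mem_unitaryGroup (n := n)
  exact mul_mem (mul_mem (mul_mem (mul_mem (mul_mem (mul_mem (hCZ Sb) (hP Sb)) hH) (hCZ S))
    (hP S)) hH) hCX

theorem commute_Umid_layer_Xg (S : Finset (Fin n)) {Sb A : Finset (Fin n)}
    (hA : Disjoint A Sb) : Commute (Umid S Sb) (layer Xg A) := by
  have hCZSb : SemiconjBy (czBlock Sb) (layer Xg A) (layer Xg A) :=
    commute_czBlock_layer_of_disjoint Xg hA.symm
  have hPSb := commute_layer_of_disjoint Pg Xg hA.symm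
  have hXtoZ := semiconjBy_layer_Hg_layer_Xg S A
  have hZtoX := semiconjBy_layer_Hg_hadamardConjX S A
  have hCZS := commute_czBlock_hadamardConjX S A
  have hPS := commute_layer_Pg_hadamardConjX S A
  have hCX := commute_cxBlock_layer_Xg S hA.symm
  exact (((((hCZSb.mul_left hPSb).mul_left hZtoX).mul_left hCZS).mul_left hPS).mul_left
    hXtoZ).mul_left hCX

theorem Umid_pauli_constraint_hadamard_general {S Sb A : Finset (Fin n)}
    (hdisj : Disjoint S Sb) (hA : Disjoint A Sb) :
    Umid S Sb * layer Xg A * (Umid S Sb)ᴴ = layer Xg A := by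
  have hunitary : Umid S Sb * (Umid S Sb)ᴴ = 1 :=
    Matrix.mem_unitaryGroup_iff.mp (Umid_mem_unitaryGroup hdisj)
  rw [(commute_Umid_layer_Xg S hA).eq, Matrix.mul_assoc, hunitary, Matrix.mul_one]

end Circuit

/-- Logical Pauli constraint of `C^H_mid` for qubits with Hadamard:
for `k ∈ S`, `U (X_1 X_k) U† = X_1 X_k` (qubit `1` is index `⟨0,_⟩ : Fin n`). -/
theorem Umid_pauli_constraint_hadamard (n : ℕ) (hn : 3 ≤ n)
    (S Sb : Finset (Fin n)) (hdisj : Disjoint S Sb) (hunion : S ∪ Sb = midSet n) :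
    ∀ k ∈ S,
      Umid S Sb * (layer Xg {(⟨0, by omega⟩ : Fin n)} * layer Xg {k}) * (Umid S Sb)ᴴ =
        layer Xg {(⟨0, by omega⟩ : Fin n)} * layer Xg {k} := by
  intro k hk
  have hfirst : (⟨0, by omega⟩ : Fin n) ∉ S ∪ Sb := by simp [hunion, midSet]
  have hpair : Disjoint ({⟨0, by omega⟩} : Finset (Fin n)) {k} := by grind [Finset.disjoint_left]
  rw [layer_mul_layer_of_disjoint Xg hpair]
  exact Umid_pauli_constraint_hadamard_general hdisj (by grind [Finset.disjoint_left])
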